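/- Let 𝓑 be a cover on a countably infinite set X and suppose (t, F, Γ) and (t′, F′, Γ′) are conditions in ℙ(𝓑) with t = t′ and F = F′. Then the two conditions are compatible: there exists a condition (t*, F*, Γ*) ∈ ℙ(𝓑) with t ⊆ t*, F ⊆ F* and Γ ∪ Γ′ ⊆ Γ*. -/

import Mathlib

/-- A cover on a (countable) set `X`: a countable family of subsets of `X` not containing
`X` itself and closed under adding finite sets. -/
def IsCover {X : Type*} (B : Set (Set X)) : Prop :=
  B.Countable ∧ Set.univ ∉ B ∧ ∀ A ∈ B, ∀ b : Set X, b.Finite → A ∪ b ∈ B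

/-- The finite sequence `l` is an initial segment of the infinite sequence `f`. -/
def IsInitSeg {X : Type*} (l : List X) (f : ℕ → X) : Prop :=
  l = (List.range l.length).map f

/-- The maximal nodes of a tree `t` of finite sequences. -/
def maximalNodes {X : Type*} (t : Set (List X)) : Set (List X) :=
  {s ∈ t | ∀ r ∈ t, s <+: r → r = s}

/-- `(t, F, Γ)` is a condition of the forcing `ℙ(𝓑)`:
1. `t` is a finite tree of finite sequences from `X`, closed under initial segments;
2. `F` maps the nodes of `t` into `𝓑`;
3. `Γ` is a finite set of infinite sequences from `X`;
4. there is a one-to-one map `β` of `Γ` onto the maximal nodes of `t` with `β x` an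
   initial segment of `x` for each `x ∈ Γ`;
5. `x n ∈ F (x↾n)` for every `x ∈ Γ` and every `n` with `x↾n ∈ t`. -/
def IsPCondition {X : Type*} (B : Set (Set X))
    (t : Set (List X)) (F : List X → Set X) (Γ : Set (ℕ → X)) : Prop :=
  t.Finite ∧ (∀ s ∈ t, ∀ r : List X, r <+: s → r ∈ t) ∧
  (∀ τ ∈ t, F τ ∈ B) ∧
  Γ.Finite ∧
  (∃ β : (ℕ → X) → List X, Set.InjOn β Γ ∧ β '' Γ = maximalNodes t ∧
    ∀ x ∈ Γ, IsInitSeg (β x) x) ∧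
  (∀ x ∈ Γ, ∀ n : ℕ, (List.range n).map x ∈ t → x n ∈ F ((List.range n).map x))

theorem res_prefix {X : Type*} (x : ℕ → X) (n : ℕ) (r : List X)
    (h : r <+: (List.range n).map x) :
    r.length ≤ n ∧ r = (List.range r.length).map x := by
  have hl : r.length ≤ n := by simpa using h.length_le
  refine ⟨hl, ?_⟩
  have h1 := List.prefix_iff_eq_take.1 h
  rw [← List.map_take, List.take_range, min_eq_left hl] at h1
  exact h1

theorem prefix_res {X : Type*} (x : ℕ → X) (m n : ℕ) (h : m ≤ n) :
    (List.range m).map x <+: (List.range n).map x := by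
  rw [List.prefix_iff_eq_take, ← List.map_take, List.take_range]
  simp [h]

theorem node_branch {X : Type*} {B : Set (Set X)} {t : Set (List X)} {F : List X → Set X}
    {Γ : Set (ℕ → X)} (h : IsPCondition B t F Γ) (s : List X) (hs : s ∈ t) :
    ∃ x ∈ Γ, s = (List.range s.length).map x := by
  obtain ⟨ht, -, -, -, ⟨β, -, hβ, hi⟩, -⟩ := h
  obtain ⟨m, ⟨hm, hsm⟩, hmax⟩ := Set.exists_max_image {r ∈ t | s <+: r} List.length
    (ht.subset (Set.sep_subset _ _)) ⟨s, hs, List.prefix_rfl⟩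
  have : m ∈ β '' Γ := by
    rw [hβ]
    refine ⟨hm, fun r hr hmr => ?_⟩
    exact (hmr.eq_of_length_le (hmax r ⟨hr, hsm.trans hmr⟩)).symm
  obtain ⟨x, hx, rfl⟩ := this
  refine ⟨x, hx, ?_⟩
  have h2 := hi x hx
  unfold IsInitSeg at h2
  rw [h2] at hsm
  exact (res_prefix x _ s hsm).2

theorem stmt11 {X : Type*} [Countable X] [Infinite X]
    (B : Set (Set X)) (hB : IsCover B)
    (t : Set (List X)) (F : List X → Set X) (Γ Γ' : Set (ℕ → X))
    (h : IsPCondition B t F Γ) (h' : IsPCondition B t F Γ') :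
    ∃ (ts : Set (List X)) (Fs : List X → Set X) (Γs : Set (ℕ → X)),
      IsPCondition B ts Fs Γs ∧ t ⊆ ts ∧ (∀ τ ∈ t, Fs τ = F τ) ∧ Γ ∪ Γ' ⊆ Γs := by
  classical
  rcases t.eq_empty_or_nonempty with rfl | ⟨s0, hs0⟩
  · have e : ∀ G, IsPCondition B ∅ F G → G = ∅ := by
      rintro G ⟨-, -, -, -, ⟨β, -, hβ, -⟩, -⟩
      have : maximalNodes (∅ : Set (List X)) = ∅ := by simp [maximalNodes]
      rw [this, Set.image_eq_empty] at hβ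
      exact hβ
    refine ⟨∅, F, Γ, h, subset_rfl, fun _ _ => rfl, ?_⟩
    rw [e _ h']
    simp
  have hG : (Γ ∪ Γ').Finite := h.2.2.2.1.union h'.2.2.2.1
  have hF := h.2.2.1
  have hd : ∀ p : (ℕ → X) × (ℕ → X), ∃ d, p.1 ≠ p.2 → p.1 d ≠ p.2 d := by
    intro p
    by_cases hp : p.1 = p.2
    · exact ⟨0, fun q => absurd hp q⟩
    · obtain ⟨d, hd⟩ := Function.ne_iff.1 hp
      exact ⟨d, fun _ => hd⟩
  choose d hd using hd
  obtain ⟨N1, hN1⟩ := ((hG.prod hG).image d).bddAbove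
  obtain ⟨N2, hN2⟩ := (h.1.image List.length).bddAbove
  obtain ⟨N, hNa, hNb⟩ : ∃ N, N1 < N ∧ N2 ≤ N := ⟨N1 + N2 + 1, by omega, by omega⟩
  have hinj : Set.InjOn (fun x : ℕ → X => (List.range N).map x) (Γ ∪ Γ') := by
    intro x hx y hy hxy
    by_contra hne
    have h1 : d (x, y) ≤ N1 := hN1 ⟨(x, y), ⟨hx, hy⟩, rfl⟩
    have h2 := List.map_inj_left.1 hxy (d (x, y)) (List.mem_range.2 (by omega))
    exact hd (x, y) hne h2
  have hfinP : ((Γ ∪ Γ') ×ˢ Set.Iic N).Finite := hG.prod (Set.finite_Iic N)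
  let ts : Set (List X) := (fun p : (ℕ → X) × ℕ => (List.range p.2).map p.1) ''
    ((Γ ∪ Γ') ×ˢ Set.Iic N)
  let b : Set X := (fun p : (ℕ → X) × ℕ => p.1 p.2) '' ((Γ ∪ Γ') ×ˢ Set.Iic N)
  have hsub : t ⊆ ts := by
    intro s hs
    obtain ⟨x, hx, hsx⟩ := node_branch h s hs
    exact ⟨(x, s.length), ⟨Or.inl hx, (hN2 ⟨s, hs, rfl⟩).trans hNb⟩, hsx.symm⟩
  refine ⟨ts, fun τ => if τ ∈ t then F τ else F s0 ∪ b, Γ ∪ Γ',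
    ⟨hfinP.image _, ?_, ?_, hG, ⟨fun x => (List.range N).map x, hinj, ?_, ?_⟩, ?_⟩,
    hsub, fun τ hτ => if_pos hτ, subset_rfl⟩
  · rintro _ ⟨⟨x, n⟩, ⟨hx, hn⟩, rfl⟩ r hr
    obtain ⟨h1, h2⟩ := res_prefix x n r hr
    exact ⟨(x, r.length), ⟨hx, h1.trans hn⟩, h2.symm⟩
  · intro τ _
    dsimp only
    split_ifs with hτ
    · exact hF τ hτ
    · exact hB.2.2 _ (hF s0 hs0) _ (hfinP.image _)
  · ext s
    constructor
    · rintro ⟨x, hx, rfl⟩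
      refine ⟨⟨(x, N), ⟨hx, le_refl N⟩, rfl⟩, ?_⟩
      rintro _ ⟨⟨y, n⟩, ⟨hy, hn⟩, rfl⟩ hp
      refine (hp.eq_of_length_le ?_).symm
      simpa using hn
    · rintro ⟨⟨⟨x, n⟩, ⟨hx, hn⟩, rfl⟩, hmax⟩
      exact ⟨x, hx, hmax _ ⟨(x, N), ⟨hx, le_refl N⟩, rfl⟩ (prefix_res x n N hn)⟩
  · intro x _
    simp [IsInitSeg]
  · intro x hx n hn
    dsimp only
    split_ifs with hτ
    · rcases hx with hx | hx
      · exact h.2.2.2.2.2 x hx n hτ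
      · exact h'.2.2.2.2.2 x hx n hτ
    · obtain ⟨⟨y, m⟩, ⟨hy, hm⟩, he⟩ := hn
      have hmn : m = n := by simpa using congrArg List.length he
      exact Or.inr ⟨(x, n), ⟨hx, hmn ▸ hm⟩, rfl⟩
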